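/- Let I ⊆ ℝ be an open interval, R₀ : I → ℝ smooth and positive, F an antiderivative of √R₀ on I, and let C₁,C₂,C₃ be nonzero constants and c₁,c₂,c₃ constants. Define R_μ(t) = C_μ e^{2 c_μ F(t)} for μ = 1,2,3, and the diagonal tensor field R(t,x,y,z) = diag(R₀(t), R₁(t), R₂(t), R₃(t)). Then the vector field X with components (X⁰,X¹,X²,X³)(t,x,y,z) = (1/√R₀(t), −c₁·x, −c₂·y, −c₃·z) satisfies L_X R = 0, i.e., X is a Ricci collineation of every Bianchi I space-time whose Ricci tensor has this form. -/

import Mathlib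

/-- Partial derivative `∂_a f` on ℝ⁴ (coordinates indexed by `Fin 4`). -/
noncomputable def pderiv4 (a : Fin 4) (f : (Fin 4 → ℝ) → ℝ) (p : Fin 4 → ℝ) : ℝ :=
  fderiv ℝ f p (Pi.single a 1)

/-- Lie derivative of a (0,2)-tensor field `T` along the vector field `X`:
`(L_X T)_{ab} = Σ_c X^c ∂_c T_{ab} + Σ_c T_{cb} ∂_a X^c + Σ_c T_{ac} ∂_b X^c`. -/
noncomputable def lieDerivT (X : (Fin 4 → ℝ) → Fin 4 → ℝ)
    (T : (Fin 4 → ℝ) → Matrix (Fin 4) (Fin 4) ℝ) (p : Fin 4 → ℝ) :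
    Matrix (Fin 4) (Fin 4) ℝ :=
  Matrix.of fun a b =>
    (∑ c, X p c * pderiv4 c (fun q => T q a b) p)
      + (∑ c, T p c b * pderiv4 a (fun q => X q c) p)
      + (∑ c, T p a c * pderiv4 b (fun q => X q c) p)

/-!
If the component `X^a` of a vector field depends only on the coordinate `x^a`, then `L_X` maps
diagonal tensor fields to diagonal ones, and for a tensor field `diag(d_a(t))` the equation
`L_X T = 0` decouples into the four scalar equations `X⁰ d_a' + 2 d_a ∂_a X^a = 0`. For `a = 0`
it says that `X⁰ √R₀` is constant; for `a = μ`, with `X⁰ = 1/√R₀` and `∂_μ X^μ = -c_μ`, it says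
that the logarithmic derivative of `R_μ` is `2 c_μ √R₀`.
-/

lemma pderiv4_const (a : Fin 4) (k : ℝ) (p : Fin 4 → ℝ) : pderiv4 a (fun _ => k) p = 0 := by
  simp [pderiv4]

lemma pderiv4_comp_apply {g : ℝ → ℝ} {g' : ℝ} {p : Fin 4 → ℝ} {i : Fin 4}
    (hg : HasDerivAt g g' (p i)) (a : Fin 4) :
    pderiv4 a (fun q => g (q i)) p = Pi.single (M := fun _ => ℝ) i g' a := by
  have hcomp : HasFDerivAt (fun q : Fin 4 → ℝ => g (q i))
      (g' • ContinuousLinearMap.proj (R := ℝ) (φ := fun _ => ℝ) i) p :=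
    hg.comp_hasFDerivAt p (hasFDerivAt_apply i p)
  simp [pderiv4, hcomp.fderiv, Pi.single_apply, eq_comm]

theorem lieDerivT_diagonal {X d : (Fin 4 → ℝ) → Fin 4 → ℝ} {p v : Fin 4 → ℝ}
    (hX : ∀ a b, pderiv4 b (fun q => X q a) p = Pi.single (M := fun _ => ℝ) a (v a) b) :
    lieDerivT X (fun q => Matrix.diagonal (d q)) p =
      Matrix.diagonal fun a => ∑ c, X p c * pderiv4 c (fun q => d q a) p + 2 * d p a * v a := by
  ext a b
  obtain rfl | hab := eq_or_ne a b
  · simp only [lieDerivT, hX, Matrix.of_apply, Matrix.diagonal_apply, Pi.single_apply, ite_mul,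
      mul_ite, zero_mul, mul_zero, Finset.sum_ite_eq, Finset.mem_univ, if_true]
    ring
  · simp [lieDerivT, hX, Matrix.diagonal_apply, Pi.single_apply, hab, pderiv4_const]

theorem lieDerivT_diagonal_of_time_dependent {ξ d : Fin 4 → ℝ → ℝ} {p v d' : Fin 4 → ℝ}
    (hξ : ∀ a, HasDerivAt (ξ a) (v a) (p a)) (hd : ∀ a, HasDerivAt (d a) (d' a) (p 0)) :
    lieDerivT (fun q a => ξ a (q a)) (fun q => Matrix.diagonal fun a => d a (q 0)) p =
      Matrix.diagonal fun a => ξ 0 (p 0) * d' a + 2 * d a (p 0) * v a := by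
  rw [lieDerivT_diagonal fun a => pderiv4_comp_apply (hξ a)]
  simp [pderiv4_comp_apply (hd _), Pi.single_apply]

lemma hasDerivAt_one_div_sqrt {f : ℝ → ℝ} {f' t : ℝ} (hf : HasDerivAt f f' t) (hpos : 0 < f t) :
    HasDerivAt (fun s => 1 / √(f s)) (-f' / (2 * f t * √(f t))) t := by
  have hsqrt : √(f t) ≠ 0 := (Real.sqrt_pos.mpr hpos).ne'
  simp only [one_div]
  refine ((hf.sqrt hpos.ne').fun_inv hsqrt).congr_deriv ?_
  rw [Real.sq_sqrt hpos.le]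
  field_simp

theorem bianchiI_caseA_ricci_collineation_general
    {R₀ F : ℝ → ℝ} {C c : Fin 3 → ℝ}
    {Ric : (Fin 4 → ℝ) → Matrix (Fin 4) (Fin 4) ℝ} {X : (Fin 4 → ℝ) → Fin 4 → ℝ}
    (hRic : ∀ p : Fin 4 → ℝ,
      Ric p = Matrix.diagonal
        (Fin.cons (R₀ (p 0)) (fun μ : Fin 3 => C μ * Real.exp (2 * c μ * F (p 0)))))
    (hX : ∀ p : Fin 4 → ℝ,
      X p = ![1 / √(R₀ (p 0)), -(c 0) * p 1, -(c 1) * p 2, -(c 2) * p 3])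
    {p : Fin 4 → ℝ} (hR : DifferentiableAt ℝ R₀ (p 0)) (hpos : 0 < R₀ (p 0))
    (hF : HasDerivAt F √(R₀ (p 0)) (p 0)) :
    lieDerivT X Ric p = 0 := by
  let ξ : Fin 4 → ℝ → ℝ := Fin.cons (fun t => 1 / √(R₀ t)) fun μ x => -(c μ) * x
  let d : Fin 4 → ℝ → ℝ := Fin.cons R₀ fun μ t => C μ * Real.exp (2 * c μ * F t)
  let v : Fin 4 → ℝ := Fin.cons (-deriv R₀ (p 0) / (2 * R₀ (p 0) * √(R₀ (p 0)))) fun μ => -(c μ)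
  let d' : Fin 4 → ℝ := Fin.cons (deriv R₀ (p 0)) fun μ =>
    C μ * (Real.exp (2 * c μ * F (p 0)) * (2 * c μ * √(R₀ (p 0))))
  have hX_eq : X = fun q a => ξ a (q a) := by
    ext q a
    rw [hX]
    fin_cases a <;> rfl
  have hRic_eq : Ric = fun q => Matrix.diagonal fun a => d a (q 0) := by
    ext q : 1
    rw [hRic]
    congr 1
    ext a
    cases a using Fin.cases <;> rfl
  have hξ : ∀ a, HasDerivAt (ξ a) (v a) (p a) :=
    Fin.cases (hasDerivAt_one_div_sqrt hR.hasDerivAt hpos) fun μ => hasDerivAt_const_mul (-(c μ))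
  have hd : ∀ a, HasDerivAt (d a) (d' a) (p 0) :=
    Fin.cases hR.hasDerivAt fun μ => ((hF.const_mul (2 * c μ)).exp).const_mul (C μ)
  have hsqrt : √(R₀ (p 0)) ≠ 0 := (Real.sqrt_pos.mpr hpos).ne'
  have hcomponents : ∀ a, ξ 0 (p 0) * d' a + 2 * d a (p 0) * v a = 0 := by
    refine Fin.cases ?_ fun μ => ?_
    · simp only [ξ, d, v, d', Fin.cons_zero]
      field_simp
      ring
    · simp only [ξ, d, v, d', Fin.cons_zero, Fin.cons_succ]
      field_simp
      ring
  rw [hX_eq, hRic_eq, lieDerivT_diagonal_of_time_dependent hξ hd]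
  exact Matrix.diagonal_eq_zero.mpr (funext hcomponents)

/-- For a diagonal Ricci tensor `R = diag(R₀, C₁ e^{2c₁F}, C₂ e^{2c₂F}, C₃ e^{2c₃F})`
(`F` an antiderivative of `√R₀`), the vector field
`X = (1/√R₀, -c₁ x, -c₂ y, -c₃ z)` is a Ricci collineation: `L_X R = 0`. -/
theorem bianchiI_caseA_ricci_collineation
    (I : Set ℝ) (hIopen : IsOpen I) (hIconn : I.OrdConnected)
    (R₀ : ℝ → ℝ) (hR : ContDiffOn ℝ (⊤ : ℕ∞) R₀ I) (hRpos : ∀ t ∈ I, 0 < R₀ t)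
    (F : ℝ → ℝ) (hF : ∀ t ∈ I, HasDerivAt F (Real.sqrt (R₀ t)) t)
    (C c : Fin 3 → ℝ) (hC : ∀ μ : Fin 3, C μ ≠ 0)
    (Ric : (Fin 4 → ℝ) → Matrix (Fin 4) (Fin 4) ℝ)
    (hRic : ∀ p : Fin 4 → ℝ,
      Ric p = Matrix.diagonal
        (Fin.cons (R₀ (p 0)) (fun μ : Fin 3 => C μ * Real.exp (2 * c μ * F (p 0)))))
    (X : (Fin 4 → ℝ) → Fin 4 → ℝ)
    (hX : ∀ p : Fin 4 → ℝ,
      X p = ![1 / Real.sqrt (R₀ (p 0)), -(c 0) * p 1, -(c 1) * p 2, -(c 2) * p 3]) :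
    ∀ p : Fin 4 → ℝ, p 0 ∈ I → lieDerivT X Ric p = 0 := fun _ hp =>
  bianchiI_caseA_ricci_collineation_general hRic hX
    ((hR.differentiableOn (by simp)).differentiableAt (hIopen.mem_nhds hp)) (hRpos _ hp) (hF _ hp)
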